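/- arXiv:2110.12065 — 3 statements merged into one kernel-verified Lean document; each statement's English description precedes it below -/
import Mathlib

section
/- The min1 product is a Mercer-type (positive semidefinite) kernel: for any vectors x_1, …, x_N ∈ ℝⁿ, the N×N Gram matrix K with entries K_{jk} = x_j ⊙ x_k is symmetric positive semidefinite, i.e. for all c ∈ ℝᴺ, Σ_{j,k} c_j c_k (x_j ⊙ x_k) ≥ 0. -/
/-!
The sign factor `sign (u * v) = sign u * sign v` is a rank-one kernel on `ℝ`, and `min` on `ℝ≥0` is
the covariance kernel of Brownian motion, that is, the `L²` inner product of the indicators of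
`[0, a]` and `[0, b]`. By the Schur product theorem the one-dimensional min1 product is a positive
semidefinite kernel, and a sum of such kernels over the coordinates is again one.
-/

/-- min1 product: `w ⊙ x = ∑ i, sign (w i * x i) * min |w i| |x i|`. -/
noncomputable def min1Prod {n : ℕ} (w x : Fin n → ℝ) : ℝ :=
  ∑ i, Real.sign (w i * x i) * min |w i| |x i|

open scoped NNReal

lemma posSemidef_of_forall_finset {ι R : Type*} [Ring R] [PartialOrder R] [StarRing R]
    {M : Matrix ι ι R}
    (hM : ∀ s : Finset ι, (M.submatrix ((↑) : s → ι) (↑)).PosSemidef) : M.PosSemidef := by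
  classical
  refine ⟨Matrix.IsHermitian.ext fun i j ↦ ?_, fun c ↦ ?_⟩
  · exact (hM {i, j}).isHermitian.apply ⟨i, by simp⟩ ⟨j, by simp⟩
  · have hc := (hM c.support).dotProduct_mulVec_nonneg fun i ↦ c i
    simpa [dotProduct, Matrix.mulVec, Finset.mul_sum, ← mul_assoc, Finsupp.sum,
      ← Finset.sum_attach c.support] using hc

lemma sum_sum_star_mul_mul_nonneg {ι R : Type*} [Fintype ι] [CommRing R] [PartialOrder R]
    [StarRing R] {M : Matrix ι ι R} (hM : M.PosSemidef) (c : ι → R) :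
    0 ≤ ∑ j, ∑ k, star (c j) * c k * M j k := by
  simpa only [dotProduct, Matrix.mulVec, Finset.mul_sum, Pi.star_apply, mul_assoc,
    mul_comm (M _ _)] using hM.dotProduct_mulVec_nonneg c

lemma posSemidef_mul_star {ι R : Type*} [Ring R] [PartialOrder R] [StarRing R] [StarOrderedRing R]
    (f : ι → R) : (Matrix.of fun i j ↦ f i * star (f j)).PosSemidef :=
  posSemidef_of_forall_finset fun s ↦ Matrix.posSemidef_vecMulVec_self_star fun i : s ↦ f i

lemma posSemidef_min : (Matrix.of fun a b : ℝ≥0 ↦ min (a : ℝ) b).PosSemidef :=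
  posSemidef_of_forall_finset ProbabilityTheory.BrownianReal.posSemidef_covMatrix

lemma real_sign_mul (u v : ℝ) : Real.sign (u * v) = Real.sign u * Real.sign v := by
  rcases lt_trichotomy u 0 with hu | rfl | hu <;> rcases lt_trichotomy v 0 with hv | rfl | hv <;>
    simp [Real.sign_of_neg, Real.sign_of_pos, mul_pos_of_neg_of_neg, mul_neg_of_neg_of_pos,
      mul_neg_of_pos_of_neg, *]

lemma posSemidef_sign_mul : (Matrix.of fun u v : ℝ ↦ Real.sign (u * v)).PosSemidef := by
  simpa only [real_sign_mul, star_trivial] using posSemidef_mul_star Real.sign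

lemma posSemidef_sign_mul_min_abs :
    (Matrix.of fun u v : ℝ ↦ Real.sign (u * v) * min |u| |v|).PosSemidef :=
  posSemidef_sign_mul.hadamard (posSemidef_min.submatrix Real.nnabs)

theorem min1Prod_gram_posSemidef_general {ι : Type*} {n : ℕ} (x : ι → Fin n → ℝ) :
    (Matrix.of fun j k ↦ min1Prod (x j) (x k)).PosSemidef := by
  let K : Matrix ℝ ℝ ℝ := .of fun u v ↦ Real.sign (u * v) * min |u| |v|
  have gram_eq_sum : (Matrix.of fun j k ↦ min1Prod (x j) (x k))
      = ∑ i, K.submatrix (fun j ↦ x j i) (fun j ↦ x j i) := by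
    ext j k
    simp [K, min1Prod, Matrix.sum_apply]
  rw [gram_eq_sum]
  exact Matrix.posSemidef_sum _ fun i _ ↦ posSemidef_sign_mul_min_abs.submatrix _

theorem min1Prod_gram_posSemidef {n N : ℕ} (x : Fin N → Fin n → ℝ) :
    (∀ j k, min1Prod (x j) (x k) = min1Prod (x k) (x j)) ∧
    (∀ c : Fin N → ℝ, 0 ≤ ∑ j, ∑ k, c j * c k * min1Prod (x j) (x k)) := by
  have hK := min1Prod_gram_posSemidef_general x
  exact ⟨fun j k ↦ hK.isHermitian.apply k j, sum_sum_star_mul_mul_nonneg hK⟩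
end

section
/- The min2 product is a Mercer-type (positive semidefinite) kernel: for any vectors x_1, …, x_N ∈ ℝⁿ, the N×N Gram matrix K with entries K_{jk} = x_j ⊙_m x_k is symmetric positive semidefinite, i.e. for all c ∈ ℝᴺ, Σ_{j,k} c_j c_k (x_j ⊙_m x_k) ≥ 0. -/
/-!
The kernel is a sum over coordinates, so it suffices to treat `n = 1`. The overlap of the intervals
`(0, a]` and `(0, b]` has length `(min a b)⁺`, and lengths of pairwise intersections form a Gram
matrix, that of the indicator functions in `L²`. Since the sign test lets the positive parts and
the negative parts of the two arguments interact only separately, the one-dimensional min2 kernel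
is `(min a b)⁺ + (min (-a) (-b))⁺`, a sum of two positive semidefinite kernels.
-/

/-- min2 product: `w ⊙ₘ x = ∑ i, 1(sign (w i) = sign (x i)) * min |w i| |x i|`. -/
noncomputable def min2Prod {n : ℕ} (w x : Fin n → ℝ) : ℝ :=
  ∑ i, (if Real.sign (w i) = Real.sign (x i) then (1 : ℝ) else 0) * min |w i| |x i|

/-- The min2 product of two real numbers, i.e. one summand of `min2Prod`. -/
noncomputable def min2 (a b : ℝ) : ℝ :=
  (if Real.sign a = Real.sign b then (1 : ℝ) else 0) * min |a| |b|

lemma min2_eq_posPart_min_add_posPart_min_neg (a b : ℝ) :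
    min2 a b = (min a b)⁺ + (min (-a) (-b))⁺ := by
  by_cases same_sign : Real.sign a = Real.sign b
  · rw [min2, if_pos same_sign, one_mul, posPart_def, posPart_def]
    rcases lt_trichotomy a 0 with ha | rfl | ha <;> grind [Real.sign]
  · have min_nonpos : min a b ≤ 0 := by grind [Real.sign_of_pos]
    have min_neg_nonpos : min (-a) (-b) ≤ 0 := by grind [Real.sign_of_neg]
    rw [min2, if_neg same_sign, zero_mul, posPart_eq_zero.mpr min_nonpos,
      posPart_eq_zero.mpr min_neg_nonpos, add_zero]

section Gram

open MeasureTheory Set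

variable {ι : Type*} [Finite ι]

lemma posSemidef_posPart_min (a : ι → ℝ) :
    (Matrix.of fun j k ↦ (min (a j) (a k))⁺).PosSemidef := by
  have volume_real_inter (j k : ι) :
      volume.real (Ioc 0 (a j) ∩ Ioc 0 (a k)) = (min (a j) (a k))⁺ := by
    rw [Ioc_inter_Ioc, max_self, Real.volume_real_Ioc, sub_zero, posPart_def]
  simpa only [volume_real_inter] using
    posSemidef_matrix_measure_inter (μ := volume) (fun j ↦ measurableSet_Ioc (a := 0) (b := a j))
      (fun _ ↦ measure_Ioc_lt_top.ne)

lemma posSemidef_min2 (a : ι → ℝ) : (Matrix.of fun j k ↦ min2 (a j) (a k)).PosSemidef := by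
  simp only [min2_eq_posPart_min_add_posPart_min_neg]
  exact (posSemidef_posPart_min a).add (posSemidef_posPart_min (-a))

lemma posSemidef_min2Prod {n : ℕ} (x : ι → Fin n → ℝ) :
    (Matrix.of fun j k ↦ min2Prod (x j) (x k)).PosSemidef := by
  have eq_sum : (Matrix.of fun j k ↦ min2Prod (x j) (x k)) =
      ∑ i, Matrix.of fun j k ↦ min2 (x j i) (x k i) := by
    ext j k
    simp only [Matrix.sum_apply, Matrix.of_apply, min2Prod, min2]
  rw [eq_sum]
  exact Matrix.posSemidef_sum _ fun i _ ↦ posSemidef_min2 fun j ↦ x j i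

end Gram

theorem min2Prod_gram_posSemidef {n N : ℕ} (x : Fin N → Fin n → ℝ) :
    (∀ j k, min2Prod (x j) (x k) = min2Prod (x k) (x j)) ∧
    (∀ c : Fin N → ℝ, 0 ≤ ∑ j, ∑ k, c j * c k * min2Prod (x j) (x k)) := by
  have gram_posSemidef := posSemidef_min2Prod x
  refine ⟨fun j k ↦ gram_posSemidef.isHermitian.apply k j, fun c ↦ ?_⟩
  have quadraticForm_nonneg := gram_posSemidef.dotProduct_mulVec_nonneg c
  simpa only [dotProduct, Matrix.mulVec, Matrix.of_apply, star_trivial, Finset.mul_sum,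
    mul_assoc, mul_comm (min2Prod _ _)] using quadraticForm_nonneg
end

section
/- Let A be an n×n real matrix (n ≥ 1) with all entries positive, with rows a_1, …, a_n, and let w ∈ ℝⁿ have all entries positive with ‖w‖₁ = 1. Then a single step of the ◊-MAPI iteration maps w to the vector v with entries v_i = (1 + ‖a_i‖₁)/Σ_{j=1}^n (1 + ‖a_j‖₁), i.e. (A ◊ w)/‖A ◊ w‖₁ = v. -/
/-- ◊ product: `w ◊ x = ∑ i, (sign (x i) * w i + x i * sign (w i))`. -/
noncomputable def diamondProd {n : ℕ} (w x : Fin n → ℝ) : ℝ :=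
  ∑ i, (Real.sign (x i) * w i + x i * Real.sign (w i))

/-- `A ◊ w`: the vector whose i-th entry is the ◊ product of the i-th row of `A` with `w`. -/
noncomputable def matDiamond {n : ℕ} (A : Matrix (Fin n) (Fin n) ℝ) (w : Fin n → ℝ) : Fin n → ℝ :=
  fun i => diamondProd (A i) w

/-- ℓ1 norm of a vector in ℝⁿ. -/
def l1Norm {n : ℕ} (x : Fin n → ℝ) : ℝ := ∑ i, |x i|

/-!
When `w` and `x` have the same sign in every coordinate, each summand
`sign (x i) * w i + x i * sign (w i)` of `w ◊ x` equals `|w i| + |x i|`, so `w ◊ x = ‖w‖₁ + ‖x‖₁`.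
Hence if every row of `A` has the sign pattern of `w`, the entries of `A ◊ w` are the nonnegative
numbers `‖w‖₁ + ‖a_i‖₁`, and their sum is `‖A ◊ w‖₁`.
-/

theorem realSign_mul_self (x : ℝ) : Real.sign x * x = |x| := by
  obtain hx | rfl | hx := lt_trichotomy x 0
  · rw [Real.sign_of_neg hx, abs_of_neg hx, neg_one_mul]
  · rw [mul_zero, abs_zero]
  · rw [Real.sign_of_pos hx, abs_of_pos hx, one_mul]

section L1Norm

variable {n : ℕ}

theorem l1Norm_nonneg (x : Fin n → ℝ) : 0 ≤ l1Norm x :=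
  Finset.sum_nonneg fun i _ => abs_nonneg (x i)

theorem l1Norm_eq_zero_iff {x : Fin n → ℝ} : l1Norm x = 0 ↔ x = 0 := by
  simp [l1Norm, Finset.sum_eq_zero_iff_of_nonneg, funext_iff]

theorem l1Norm_pos_iff {x : Fin n → ℝ} : 0 < l1Norm x ↔ x ≠ 0 :=
  (l1Norm_nonneg x).lt_iff_ne'.trans l1Norm_eq_zero_iff.not

theorem l1Norm_eq_sum_of_nonneg {x : Fin n → ℝ} (hx : ∀ i, 0 ≤ x i) : l1Norm x = ∑ i, x i :=
  Finset.sum_congr rfl fun i _ => abs_of_nonneg (hx i)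

end L1Norm

theorem diamondProd_of_sign_eq {n : ℕ} {w x : Fin n → ℝ}
    (h : ∀ i, Real.sign (w i) = Real.sign (x i)) :
    diamondProd w x = l1Norm w + l1Norm x := by
  simp only [diamondProd, l1Norm, ← Finset.sum_add_distrib]
  refine Finset.sum_congr rfl fun i _ => ?_
  calc Real.sign (x i) * w i + x i * Real.sign (w i)
      = Real.sign (w i) * w i + Real.sign (x i) * x i := by rw [h i, mul_comm (x i)]
    _ = |w i| + |x i| := by rw [realSign_mul_self, realSign_mul_self]

section MatDiamond

variable {n : ℕ} {A : Matrix (Fin n) (Fin n) ℝ} {w : Fin n → ℝ}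

theorem matDiamond_of_sign_eq (h : ∀ i j, Real.sign (A i j) = Real.sign (w j)) :
    matDiamond A w = fun i => l1Norm w + l1Norm (A i) :=
  funext fun i => (diamondProd_of_sign_eq (h i)).trans (add_comm _ _)

theorem l1Norm_matDiamond_of_sign_eq (h : ∀ i j, Real.sign (A i j) = Real.sign (w j)) :
    l1Norm (matDiamond A w) = ∑ i, (l1Norm w + l1Norm (A i)) := by
  rw [matDiamond_of_sign_eq h]
  exact l1Norm_eq_sum_of_nonneg fun i => add_nonneg (l1Norm_nonneg w) (l1Norm_nonneg (A i))

theorem matDiamond_ne_zero_of_sign_eq (h : ∀ i j, Real.sign (A i j) = Real.sign (w j))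
    (hw : w ≠ 0) : matDiamond A w ≠ 0 := by
  obtain ⟨i, -⟩ := Function.ne_iff.mp hw
  have entry_pos : 0 < l1Norm w + l1Norm (A i) :=
    add_pos_of_pos_of_nonneg (l1Norm_pos_iff.mpr hw) (l1Norm_nonneg (A i))
  rw [matDiamond_of_sign_eq h]
  exact Function.ne_iff.mpr ⟨i, entry_pos.ne'⟩

end MatDiamond

/-- The positivity of `‖A ◊ w‖₁` ensures that neither quotient is a division by zero. -/
theorem mapi_step_of_l1Norm_one_general {n : ℕ} (A : Matrix (Fin n) (Fin n) ℝ) (w : Fin n → ℝ)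
    (h : ∀ i j, Real.sign (A i j) = Real.sign (w j)) (hw : w ≠ 0) :
    0 < l1Norm (matDiamond A w) ∧
      (fun i => matDiamond A w i / l1Norm (matDiamond A w)) =
        fun i => (l1Norm w + l1Norm (A i)) / ∑ j, (l1Norm w + l1Norm (A j)) := by
  refine ⟨l1Norm_pos_iff.mpr (matDiamond_ne_zero_of_sign_eq h hw), ?_⟩
  rw [l1Norm_matDiamond_of_sign_eq h, matDiamond_of_sign_eq h]

theorem mapi_step_of_l1Norm_one {n : ℕ} (hn : 1 ≤ n) (A : Matrix (Fin n) (Fin n) ℝ)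
    (w : Fin n → ℝ) (hA : ∀ i j, 0 < A i j) (hw : ∀ i, 0 < w i)
    (hw1 : l1Norm w = 1) :
    (fun i => matDiamond A w i / l1Norm (matDiamond A w)) =
      fun i => (1 + l1Norm (A i)) / ∑ j, (1 + l1Norm (A j)) := by
  have sign_eq i j := (Real.sign_of_pos (hA i j)).trans (Real.sign_of_pos (hw j)).symm
  have w_ne_zero : w ≠ 0 := l1Norm_pos_iff.mp (hw1 ▸ one_pos)
  simpa only [hw1] using (mapi_step_of_l1Norm_one_general A w sign_eq w_ne_zero).2
end
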